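/- There exist positive constants ε₀ and C such that if ε ∈ (0,ε₀), φ ∈ C²(S) ∩ C(S̄) and g ∈ C(S) satisfy -ε⁴Δφ + w₁²φ = dist²(x, ∂S ∩ ∂Ω)·g in S and φ = 0 on ∂S, then ‖φ‖_{L∞(S)} ≤ C ‖g‖_{L∞(S)}. -/

import Mathlib

open Metric Set Filter Topology

noncomputable section

/-- The Euclidean Laplacian of a real-valued function. -/
def lap {N : ℕ} (f : EuclideanSpace ℝ (Fin N) → ℝ) (x : EuclideanSpace ℝ (Fin N)) : ℝ :=
  ∑ i : Fin N, iteratedFDeriv ℝ 2 f x (fun _ => EuclideanSpace.single i 1)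

/-!
At an interior maximum `z` of `u` the second derivative test gives `Δ u z ≤ 0`, so an inequality
`-a Δu + b u ≤ b M` with `a ≥ 0` and `b > 0` forces `u z ≤ M`. The Hopf bound `c d ≤ w` says that
the constant `M = K / c²` satisfies `d² |g| ≤ w² M`, so `±φ` are both controlled by `M`, whatever
the size of the diffusion coefficient.
-/

section SecondDerivativeTest

theorem deriv_deriv_nonpos_of_isLocalMax {f : ℝ → ℝ} {a : ℝ} (hmax : IsLocalMax f a)
    (hf : ContinuousAt f a) : deriv (deriv f) a ≤ 0 := by
  by_contra! hpos
  have hmin : IsLocalMin f a := isLocalMin_of_deriv_deriv_pos hpos hmax.deriv_eq_zero hf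
  have hconst : f =ᶠ[𝓝 a] fun _ ↦ f a := hmax.and hmin |>.mono fun _ h ↦ le_antisymm h.1 h.2
  have hzero : deriv (deriv f) a = 0 := by rw [hconst.deriv.deriv_eq]; simp
  exact hpos.ne' hzero

theorem hasDerivAt_add_smul {𝕜 E : Type*} [NontriviallyNormedField 𝕜] [NormedAddCommGroup E]
    [NormedSpace 𝕜 E] (x v : E) (t : 𝕜) : HasDerivAt (fun s : 𝕜 ↦ x + s • v) v t := by
  simpa using ((hasDerivAt_id t).smul_const v).const_add x

theorem deriv_deriv_comp_add_smul {𝕜 E F : Type*} [NontriviallyNormedField 𝕜]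
    [NormedAddCommGroup E] [NormedSpace 𝕜 E] [NormedAddCommGroup F] [NormedSpace 𝕜 F]
    {f : E → F} {x : E} (hf : ContDiffAt 𝕜 2 f x) (v : E) :
    deriv (deriv fun t : 𝕜 ↦ f (x + t • v)) 0 = iteratedFDeriv 𝕜 2 f x ![v, v] := by
  have hline : Tendsto (fun t : 𝕜 ↦ x + t • v) (𝓝 0) (𝓝 x) := by
    simpa using (hasDerivAt_add_smul x v (0 : 𝕜)).continuousAt.tendsto
  have hfirst : deriv (fun t : 𝕜 ↦ f (x + t • v)) =ᶠ[𝓝 0] fun t ↦ fderiv 𝕜 f (x + t • v) v := by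
    filter_upwards [hline.eventually (hf.eventually (by simp))] with t ht
    exact ((ht.differentiableAt two_ne_zero).hasFDerivAt.comp_hasDerivAt t
      (hasDerivAt_add_smul x v t)).deriv
  have hfderiv : HasFDerivAt (fderiv 𝕜 f) (fderiv 𝕜 (fderiv 𝕜 f) x) x :=
    ((hf.fderiv_right (m := 1) (by norm_num)).differentiableAt one_ne_zero).hasFDerivAt
  have hsecond : HasDerivAt (fun t : 𝕜 ↦ fderiv 𝕜 f (x + t • v) v)
      (fderiv 𝕜 (fderiv 𝕜 f) x v v) 0 := by
    have hcomp := hfderiv.comp_hasDerivAt_of_eq (0 : 𝕜) (hasDerivAt_add_smul x v 0) (by simp)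
    simpa using hcomp.clm_apply (hasDerivAt_const (0 : 𝕜) v)
  rw [hfirst.deriv_eq, hsecond.deriv, iteratedFDeriv_two_apply]
  rfl

theorem iteratedFDeriv_two_nonpos_of_isLocalMax {E : Type*} [NormedAddCommGroup E]
    [NormedSpace ℝ E] {f : E → ℝ} {x : E} (hf : ContDiffAt ℝ 2 f x) (hmax : IsLocalMax f x)
    (v : E) : iteratedFDeriv ℝ 2 f x ![v, v] ≤ 0 := by
  rw [← deriv_deriv_comp_add_smul hf v]
  have hline : ContinuousAt (fun t : ℝ ↦ x + t • v) 0 := (hasDerivAt_add_smul x v 0).continuousAt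
  have hx : x = x + (0 : ℝ) • v := by rw [zero_smul, add_zero]
  rw [hx] at hmax
  exact deriv_deriv_nonpos_of_isLocalMax
    (hmax.comp_continuous (g := fun t : ℝ ↦ x + t • v) hline)
    (hf.continuousAt.comp_of_eq hline hx.symm)

end SecondDerivativeTest

section MaximumPrinciple

open scoped Laplacian

variable {E : Type*} [NormedAddCommGroup E] [InnerProductSpace ℝ E] [FiniteDimensional ℝ E]

theorem laplacian_nonpos_of_isLocalMax {f : E → ℝ} {x : E} (hf : ContDiffAt ℝ 2 f x)
    (hmax : IsLocalMax f x) : Δ f x ≤ 0 := by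
  rw [InnerProductSpace.laplacian_eq_iteratedFDeriv_stdOrthonormalBasis]
  exact Finset.sum_nonpos fun i _ ↦ iteratedFDeriv_two_nonpos_of_isLocalMax hf hmax _

variable {S : Set E} {a b u : E → ℝ} {M : ℝ}

theorem le_of_neg_mul_laplacian_add_mul_le (hS : IsOpen S) (hSb : Bornology.IsBounded S)
    (ha : ∀ x ∈ S, 0 ≤ a x) (hb : ∀ x ∈ S, 0 < b x)
    (hu : ContDiffOn ℝ 2 u S) (huc : ContinuousOn u (closure S))
    (hle : ∀ x ∈ S, -a x * Δ u x + b x * u x ≤ b x * M)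
    (hfr : ∀ x ∈ frontier S, u x ≤ M) : ∀ x ∈ S, u x ≤ M := by
  intro x hx
  obtain ⟨z, hz, hmax⟩ := hSb.isCompact_closure.exists_isMaxOn ⟨x, subset_closure hx⟩ huc
  refine (hmax (subset_closure hx)).trans ?_
  by_cases hzS : z ∈ S
  · have hnhds : S ∈ 𝓝 z := hS.mem_nhds hzS
    have hΔ : Δ u z ≤ 0 := laplacian_nonpos_of_isLocalMax (hu.contDiffAt hnhds)
      ((hmax.on_subset subset_closure).isLocalMax hnhds)
    have hdiffusion : a z * Δ u z ≤ 0 := mul_nonpos_of_nonneg_of_nonpos (ha z hzS) hΔ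
    exact le_of_mul_le_mul_left (by linarith [hle z hzS]) (hb z hzS)
  · exact hfr z (hS.frontier_eq ▸ ⟨hz, hzS⟩)

theorem abs_le_of_abs_neg_mul_laplacian_add_mul_le (hS : IsOpen S) (hSb : Bornology.IsBounded S)
    (ha : ∀ x ∈ S, 0 ≤ a x) (hb : ∀ x ∈ S, 0 < b x)
    (hu : ContDiffOn ℝ 2 u S) (huc : ContinuousOn u (closure S))
    (hle : ∀ x ∈ S, |-a x * Δ u x + b x * u x| ≤ b x * M)
    (hfr : ∀ x ∈ frontier S, |u x| ≤ M) : ∀ x ∈ S, |u x| ≤ M := by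
  have hupper : ∀ x ∈ S, u x ≤ M :=
    le_of_neg_mul_laplacian_add_mul_le hS hSb ha hb hu huc
      (fun x hx ↦ (abs_le.1 (hle x hx)).2) fun x hx ↦ (abs_le.1 (hfr x hx)).2
  have hlower : ∀ x ∈ S, (-u) x ≤ M := by
    refine le_of_neg_mul_laplacian_add_mul_le hS hSb ha hb hu.neg huc.neg (fun x hx ↦ ?_)
      fun x hx ↦ neg_le.1 (abs_le.1 (hfr x hx)).1
    rw [InnerProductSpace.laplacian_neg, Pi.neg_apply, Pi.neg_apply]
    linarith [(abs_le.1 (hle x hx)).1]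
  exact fun x hx ↦ abs_le.2 ⟨neg_le.1 (hlower x hx), hupper x hx⟩

theorem statement_18_general (hS : IsOpen S) (hSb : Bornology.IsBounded S)
    {w d φ g : E → ℝ} {c K : ℝ} (hc : 0 < c) (hd : ∀ x ∈ S, 0 < d x)
    (hHopf : ∀ x ∈ S, c * d x ≤ w x) (ha : ∀ x ∈ S, 0 ≤ a x)
    (hφ : ContDiffOn ℝ 2 φ S) (hφc : ContinuousOn φ (closure S))
    (heq : ∀ x ∈ S, -a x * Δ φ x + w x ^ 2 * φ x = d x ^ 2 * g x)
    (hbc : ∀ x ∈ frontier S, φ x = 0) (hg : ∀ x ∈ S, |g x| ≤ K) :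
    ∀ x ∈ S, |φ x| ≤ 1 / c ^ 2 * K := by
  intro x hx
  have hK : 0 ≤ K := (abs_nonneg _).trans (hg x hx)
  have hcd : ∀ y ∈ S, 0 < c * d y := fun y hy ↦ mul_pos hc (hd y hy)
  refine abs_le_of_abs_neg_mul_laplacian_add_mul_le (b := fun y ↦ w y ^ 2) hS hSb ha
    (fun y hy ↦ pow_pos ((hcd y hy).trans_le (hHopf y hy)) 2) hφ hφc (fun y hy ↦ ?_)
    (fun y hy ↦ by rw [hbc y hy, abs_zero]; positivity) x hx
  calc |-a y * Δ φ y + w y ^ 2 * φ y|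
      = d y ^ 2 * |g y| := by rw [heq y hy, abs_mul, abs_sq]
    _ ≤ d y ^ 2 * K := by gcongr; exact hg y hy
    _ = (c * d y) ^ 2 * (1 / c ^ 2 * K) := by field_simp
    _ ≤ w y ^ 2 * (1 / c ^ 2 * K) := by
        have := (hcd y hy).le
        gcongr
        exact hHopf y hy

theorem lap_eq_laplacian {N : ℕ} (f : EuclideanSpace ℝ (Fin N) → ℝ)
    (x : EuclideanSpace ℝ (Fin N)) : lap f x = Δ f x := by
  rw [InnerProductSpace.laplacian_eq_iteratedFDeriv_orthonormalBasis f
    (EuclideanSpace.basisFun (Fin N) ℝ)]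
  refine Finset.sum_congr rfl fun i _ ↦ congrArg _ ?_
  ext j
  fin_cases j <;> simp

end MaximumPrinciple

section BoundaryStrip

variable {X : Type*} [PseudoMetricSpace X] {U : Set X}

theorem isOpen_setOf_mem_and_infDist_lt (hU : IsOpen U) (B : Set X) (r : ℝ) :
    IsOpen {x ∈ U | infDist x B < r} :=
  hU.inter (isOpen_lt (continuous_infDist_pt B) continuous_const)

theorem infDist_pos_of_mem_of_subset_frontier {B : Set X} {x : X} (hU : IsOpen U) (hx : x ∈ U)
    (hBne : B.Nonempty) (hB : B ⊆ frontier U) : 0 < infDist x B := by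
  refine (infDist_pos_iff_notMem_closure hBne).1 fun hxB ↦ ?_
  have hxU : x ∈ frontier U := closure_minimal hB isClosed_frontier hxB
  exact (hU.frontier_eq ▸ hxU).2 hx

end BoundaryStrip

/-- **Lemma A.1, second assertion.** A-priori estimate
`‖φ‖_{L∞(S)} ≤ C ‖g‖_{L∞(S)}` for `-ε⁴Δφ + w₁²φ = dist²(x,∂S ∩ ∂Ω) g`
on the boundary strip `S`. -/
theorem statement_18 {N : ℕ}
    (Ω Ω₁ : Set (EuclideanSpace ℝ (Fin N)))
    (hΩ : IsOpen Ω) (hbdd : Bornology.IsBounded Ω)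
    (hΩ₁ : IsOpen Ω₁) (hsub : Ω₁ ⊆ Ω)
    (B : Set (EuclideanSpace ℝ (Fin N)))
    (hB : B = frontier Ω ∩ frontier Ω₁) (hBne : B.Nonempty) (hBcpt : IsCompact B)
    (w₁ : EuclideanSpace ℝ (Fin N) → ℝ)
    (hw₁reg : ContDiffOn ℝ 1 w₁ (closure Ω₁))
    (hw₁pos : ∀ x ∈ Ω₁, 0 < w₁ x)
    (hw₁bc : ∀ x ∈ B, w₁ x = 0)
    (d₁ : ℝ) (hd₁ : 0 < d₁)
    (S : Set (EuclideanSpace ℝ (Fin N)))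
    (hS : S = {x ∈ Ω₁ | Metric.infDist x B < d₁})
    -- `d₁` is small enough that the nearest point projection onto `B` is a
    -- well-defined smooth map on `S`
    (proj : EuclideanSpace ℝ (Fin N) → EuclideanSpace ℝ (Fin N))
    (hproj : ∀ x ∈ S, proj x ∈ B ∧ dist x (proj x) = Metric.infDist x B)
    (hprojC : ContDiffOn ℝ (⊤ : ℕ∞) proj S)
    (c₀ : ℝ) (hc₀ : 0 < c₀)
    (hHopf : ∀ x ∈ S, c₀ * Metric.infDist x B ≤ w₁ x) :
    ∃ ε₀ C : ℝ, 0 < ε₀ ∧ 0 < C ∧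
      ∀ ε ∈ Set.Ioo (0:ℝ) ε₀, ∀ φ g : EuclideanSpace ℝ (Fin N) → ℝ,
        ContDiffOn ℝ 2 φ S → ContinuousOn φ (closure S) → ContinuousOn g S →
        (∀ x ∈ S, - ε ^ 4 * lap φ x + (w₁ x) ^ 2 * φ x = (Metric.infDist x B) ^ 2 * g x) →
        (∀ x ∈ frontier S, φ x = 0) →
        ∀ Kg : ℝ, (∀ x ∈ S, |g x| ≤ Kg) →
          ∀ x ∈ S, |φ x| ≤ C * Kg := by
  subst hS hB
  exact ⟨1, 1 / c₀ ^ 2, one_pos, by positivity, fun ε _ φ g hφ hφc _ heq hbc K hg ↦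
    statement_18_general (a := fun _ ↦ ε ^ 4) (isOpen_setOf_mem_and_infDist_lt hΩ₁ _ _)
      (hbdd.subset fun x hx ↦ hsub hx.1) hc₀
      (fun x hx ↦ infDist_pos_of_mem_of_subset_frontier hΩ₁ hx.1 hBne inter_subset_right)
      hHopf (fun _ _ ↦ by positivity) hφ hφc
      (by simpa only [lap_eq_laplacian] using heq) hbc hg⟩
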